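/- Let L, and for each layer ℓ ∈ {1,…,L}, dimensions d_out(ℓ), d_in(ℓ), r(ℓ) be positive integers, and let A_ℓ ∈ ℝ^{d_in(ℓ)×r(ℓ)} have orthonormal columns (A_ℓᵀA_ℓ = I). Fix a layer ℓ. There exists a constant c_ℓ > 0, depending only on the dimensions, such that for every Lip ≥ 0, every differentiable f with Lip-Lipschitz gradient, every μ > 0, and every point W satisfying ∇_{W_ℓ} f(W)·A_ℓA_ℓᵀ = ∇_{W_ℓ} f(W) (i.e., the row space of the true layer gradient at W lies in span(A_ℓ)), one has ‖ E_R[ ((f(W + μΔ(R)) − f(W))/μ) · R_ℓA_ℓᵀ ] − ∇_{W_ℓ} f(W) ‖_F ≤ c_ℓ · Lip · μ. In particular, the AGZO estimator is an asymptotically unbiased estimator of the true layer gradient as μ → 0. -/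

import Mathlib

open MeasureTheory ProbabilityTheory Matrix

attribute [local instance] Matrix.frobeniusNormedAddCommGroup Matrix.frobeniusNormedSpace
attribute [-instance] instTopologicalSpaceMatrix Matrix.instUniformSpace

noncomputable section

/-- Entrywise expectation of a matrix-valued function. -/
def matExp {Ω : Type*} [MeasurableSpace Ω] (P : Measure Ω)
    {ι κ : Type*} (F : Ω → Matrix ι κ ℝ) : Matrix ι κ ℝ :=
  Matrix.of fun i j => ∫ ω, F ω i j ∂P

variable {L : ℕ} {dout din r : Fin L → ℕ}

/-- The block of the (Frobenius) gradient of `f` corresponding to layer `ℓ`: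
its `(i,j)` entry is the partial derivative of `f` in the direction of the
standard basis matrix `E_{ij}` of layer `ℓ`. -/
def gradBlock (f : ((ℓ : Fin L) → Matrix (Fin (dout ℓ)) (Fin (din ℓ)) ℝ) → ℝ)
    (W : (ℓ : Fin L) → Matrix (Fin (dout ℓ)) (Fin (din ℓ)) ℝ) (ℓ : Fin L) :
    Matrix (Fin (dout ℓ)) (Fin (din ℓ)) ℝ :=
  Matrix.of fun i j => fderiv ℝ f W (Pi.single ℓ (Matrix.single i j 1))

/-- The product of standard Gaussian measures over all entries of all blocks
`R_ℓ ∈ ℝ^{dout(ℓ) × r(ℓ)}` (i.i.d. standard Gaussian entries). -/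
def gaussBlocks (dout r : Fin L → ℕ) :
    Measure ((ℓ : Fin L) → Fin (dout ℓ) → Fin (r ℓ) → ℝ) :=
  Measure.pi fun _ => Measure.pi fun _ => Measure.pi fun _ => gaussianReal 0 1

/-- The AGZO perturbation `Δ(R) = (R₁A₁ᵀ, …, R_L A_Lᵀ)`. -/
def perturbA (A : (ℓ : Fin L) → Matrix (Fin (din ℓ)) (Fin (r ℓ)) ℝ)
    (R : (ℓ : Fin L) → Fin (dout ℓ) → Fin (r ℓ) → ℝ) :
    (ℓ : Fin L) → Matrix (Fin (dout ℓ)) (Fin (din ℓ)) ℝ :=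
  fun ℓ => Matrix.of (R ℓ) * (A ℓ)ᵀ

/-- The subspace-smoothed objective `f_{μ,A}(W) = E_R[f(W + μΔ(R))]`. -/
def smoothedA (f : ((ℓ : Fin L) → Matrix (Fin (dout ℓ)) (Fin (din ℓ)) ℝ) → ℝ)
    (μ : ℝ) (A : (ℓ : Fin L) → Matrix (Fin (din ℓ)) (Fin (r ℓ)) ℝ)
    (W : (ℓ : Fin L) → Matrix (Fin (dout ℓ)) (Fin (din ℓ)) ℝ) : ℝ :=
  ∫ R, f (W + μ • perturbA A R) ∂(gaussBlocks dout r)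

instance gaussBlocks_isProb (dout r : Fin L → ℕ) : IsProbabilityMeasure (gaussBlocks dout r) := by
  unfold gaussBlocks; infer_instance

lemma gaussBlocks_eval (dout r : Fin L → ℕ) (l : Fin L) (a : Fin (dout l)) (b : Fin (r l)) :
    MeasurePreserving (fun R : (l : Fin L) → Fin (dout l) → Fin (r l) → ℝ => R l a b)
      (gaussBlocks dout r) (gaussianReal 0 1) := by
  have h1 := measurePreserving_eval (fun l : Fin L => Measure.pi fun _ : Fin (dout l) =>
    Measure.pi fun _ : Fin (r l) => gaussianReal 0 1) l
  have h2 := measurePreserving_eval (fun _ : Fin (dout l) =>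
    Measure.pi fun _ : Fin (r l) => gaussianReal 0 1) a
  have h3 := measurePreserving_eval (fun _ : Fin (r l) => gaussianReal 0 1) b
  exact h3.comp (h2.comp h1)

lemma gaussBlocks_sign (dout r : Fin L → ℕ) (s : (l : Fin L) → Fin (dout l) → Fin (r l) → ℝ)
    (hs : ∀ l a b, s l a b = 1 ∨ s l a b = -1) :
    MeasurePreserving (fun R : (l : Fin L) → Fin (dout l) → Fin (r l) → ℝ =>
      fun l a b => s l a b * R l a b) (gaussBlocks dout r) (gaussBlocks dout r) := by
  unfold gaussBlocks
  refine measurePreserving_pi _ _ (f := fun l (R : Fin (dout l) → Fin (r l) → ℝ) a b => s l a b * R a b) fun l => ?_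
  refine measurePreserving_pi _ _ (f := fun a (R : Fin (r l) → ℝ) b => s l a b * R b) fun a => ?_
  refine measurePreserving_pi _ _ (f := fun b x => s l a b * x) fun b => ?_
  refine ⟨by fun_prop, ?_⟩
  rw [gaussianReal_map_const_mul]
  rcases hs l a b with h | h <;> simp [h] <;> congr 1 <;> ext <;> simp

lemma gaussBlocks_memLp (dout r : Fin L → ℕ) (l : Fin L) (a : Fin (dout l)) (b : Fin (r l))
    (p : NNReal) :
    MemLp (fun R : (l : Fin L) → Fin (dout l) → Fin (r l) → ℝ => R l a b) p
      (gaussBlocks dout r) :=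
  (memLp_id_gaussianReal (μ := 0) (v := 1) p).comp_measurePreserving (gaussBlocks_eval dout r l a b)

lemma gaussBlocks_integrable (dout r : Fin L → ℕ) (l : Fin L) (a : Fin (dout l)) (b : Fin (r l))
    (l' : Fin L) (a' : Fin (dout l')) (b' : Fin (r l')) :
    Integrable (fun R : (l : Fin L) → Fin (dout l) → Fin (r l) → ℝ => R l a b * R l' a' b')
      (gaussBlocks dout r) :=
  MemLp.integrable_mul (p := 2) (q := 2) (gaussBlocks_memLp dout r l a b 2)
    (gaussBlocks_memLp dout r l' a' b' 2)

lemma gaussBlocks_cov_self (dout r : Fin L → ℕ) (l : Fin L) (a : Fin (dout l)) (b : Fin (r l)) :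
    ∫ R, R l a b * R l a b ∂(gaussBlocks dout r) = 1 := by
  have he := gaussBlocks_eval dout r l a b
  have h := integral_map (μ := gaussBlocks dout r) he.measurable.aemeasurable
    (f := fun x : ℝ => x * x) (by fun_prop)
  rw [← h, he.map_eq]
  have hv := variance_id_gaussianReal (μ := 0) (v := 1)
  rw [variance_of_integral_eq_zero (by fun_prop) (by simp)] at hv
  simpa [sq] using hv

lemma gaussBlocks_cov_ne (dout r : Fin L → ℕ) (l : Fin L) (a : Fin (dout l)) (b : Fin (r l))
    (l' : Fin L) (a' : Fin (dout l')) (b' : Fin (r l'))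
    (h : (⟨l', a', b'⟩ : Σ l : Fin L, Fin (dout l) × Fin (r l)) ≠ ⟨l, a, b⟩) :
    ∫ R, R l' a' b' * R l a b ∂(gaussBlocks dout r) = 0 := by
  classical
  have hs := gaussBlocks_sign dout r (fun l' a' b' =>
    if (⟨l', a', b'⟩ : Σ l : Fin L, Fin (dout l) × Fin (r l)) = ⟨l, a, b⟩ then -1 else 1)
    (by intro l a b; split_ifs <;> simp)
  have h1 : ∫ R, R l' a' b' * R l a b ∂(gaussBlocks dout r)
      = ∫ R, -(R l' a' b' * R l a b) ∂(gaussBlocks dout r) := by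
    conv_lhs => rw [← hs.map_eq]
    rw [integral_map hs.measurable.aemeasurable (by fun_prop)]
    simp only [if_neg h]
    simp
  rw [integral_neg] at h1
  linarith

/-- standard basis of the noise space -/
def eBasis (dout r : Fin L → ℕ) (l : Fin L) (a : Fin (dout l)) (b : Fin (r l)) :
    (l : Fin L) → Fin (dout l) → Fin (r l) → ℝ :=
  Pi.single l (Pi.single a (Pi.single b 1))

lemma eq_sum_eBasis (R : (l : Fin L) → Fin (dout l) → Fin (r l) → ℝ) :
    R = ∑ l, ∑ a, ∑ b, R l a b • eBasis dout r l a b := by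
  have h : ∀ l, ∑ a, ∑ b, R l a b • eBasis dout r l a b = Pi.single l (R l) := by
    intro l
    have h3 : R l = ∑ a, ∑ b, R l a b • (Pi.single a (Pi.single b (1 : ℝ)) :
        Fin (dout l) → Fin (r l) → ℝ) := by
      ext a b
      simp [Finset.sum_apply, Pi.single_apply, ite_apply]
    ext l' a b
    by_cases hl : l' = l
    · subst hl
      conv_rhs => rw [h3]
      simp [eBasis, Finset.sum_apply]
    · simp [eBasis, Finset.sum_apply, hl]
  simp only [h]
  ext l a b
  rw [Finset.univ_sum_single]

lemma cov_linear_aux (φ : ((l : Fin L) → Fin (dout l) → Fin (r l) → ℝ) →ₗ[ℝ] ℝ)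
    (l : Fin L) (a : Fin (dout l)) (b : Fin (r l))
    (R : (l : Fin L) → Fin (dout l) → Fin (r l) → ℝ) :
    φ R * R l a b = ∑ l', ∑ a', ∑ b', φ (eBasis dout r l' a' b') * (R l' a' b' * R l a b) := by
  have h : φ R = ∑ l', ∑ a', ∑ b', R l' a' b' * φ (eBasis dout r l' a' b') := by
    conv_lhs => rw [eq_sum_eBasis R]
    simp only [map_sum, map_smul, smul_eq_mul]
  rw [h]
  simp only [Finset.sum_mul]
  refine Finset.sum_congr rfl fun _ _ => Finset.sum_congr rfl fun _ _ =>
    Finset.sum_congr rfl fun _ _ => by ring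

lemma cov_linear_integrable (φ : ((l : Fin L) → Fin (dout l) → Fin (r l) → ℝ) →ₗ[ℝ] ℝ)
    (l : Fin L) (a : Fin (dout l)) (b : Fin (r l)) :
    Integrable (fun R => φ R * R l a b) (gaussBlocks dout r) := by
  simp only [cov_linear_aux φ l a b]
  exact integrable_finsetSum _ fun _ _ => integrable_finsetSum _ fun _ _ =>
    integrable_finsetSum _ fun _ _ => (gaussBlocks_integrable ..).const_mul _

lemma cov_linear (φ : ((l : Fin L) → Fin (dout l) → Fin (r l) → ℝ) →ₗ[ℝ] ℝ)
    (l : Fin L) (a : Fin (dout l)) (b : Fin (r l)) :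
    ∫ R, φ R * R l a b ∂(gaussBlocks dout r) = φ (eBasis dout r l a b) := by
  simp only [cov_linear_aux φ l a b]
  have hi := gaussBlocks_integrable dout r
  rw [integral_finsetSum _ fun _ _ => integrable_finsetSum _ fun _ _ =>
    integrable_finsetSum _ fun _ _ => (hi ..).const_mul _]
  rw [Finset.sum_eq_single l, integral_finsetSum _ fun _ _ =>
    integrable_finsetSum _ fun _ _ => (hi ..).const_mul _, Finset.sum_eq_single a,
    integral_finsetSum _ fun _ _ => (hi ..).const_mul _, Finset.sum_eq_single b]
  · rw [integral_const_mul, gaussBlocks_cov_self, mul_one]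
  · intro b' _ hb
    rw [integral_const_mul, gaussBlocks_cov_ne, mul_zero]
    simpa using hb
  · simp
  · intro a' _ ha
    rw [integral_finsetSum _ fun _ _ => (hi ..).const_mul _]
    refine Finset.sum_eq_zero fun b' _ => ?_
    rw [integral_const_mul, gaussBlocks_cov_ne, mul_zero]
    simp [ha]
  · simp
  · intro l' _ hl
    rw [integral_finsetSum _ fun _ _ =>
      integrable_finsetSum _ fun _ _ => (hi ..).const_mul _]
    refine Finset.sum_eq_zero fun a' _ => ?_
    rw [integral_finsetSum _ fun _ _ => (hi ..).const_mul _]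
    refine Finset.sum_eq_zero fun b' _ => ?_
    rw [integral_const_mul, gaussBlocks_cov_ne, mul_zero]
    simp [hl]
  · simp

/-- Sum of absolute values of all noise entries. -/
def absSum (R : (l : Fin L) → Fin (dout l) → Fin (r l) → ℝ) : ℝ := ∑ l, ∑ a, ∑ b, |R l a b|

lemma absSum_block (R : (l : Fin L) → Fin (dout l) → Fin (r l) → ℝ) (l : Fin L) :
    ∑ a, ∑ b, |R l a b| ≤ absSum R :=
  Finset.single_le_sum (f := fun l => ∑ a, ∑ b, |R l a b|)
    (fun _ _ => by positivity) (Finset.mem_univ l)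

lemma absSum_row (R : (l : Fin L) → Fin (dout l) → Fin (r l) → ℝ) (l : Fin L)
    (a : Fin (dout l)) : ∑ b, |R l a b| ≤ absSum R :=
  (Finset.single_le_sum (f := fun a => ∑ b, |R l a b|)
    (fun _ _ => by positivity) (Finset.mem_univ a)).trans (absSum_block R l)

lemma absSum_nonneg (R : (l : Fin L) → Fin (dout l) → Fin (r l) → ℝ) : 0 ≤ absSum R := by
  unfold absSum; positivity

lemma absSum_integrable (dout r : Fin L → ℕ) :
    Integrable (fun R => (absSum R) ^ 3) (gaussBlocks dout r) := by
  have h : MemLp (fun R => absSum R) ((3 : ℕ) : ENNReal) (gaussBlocks dout r) := by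
    unfold absSum
    exact memLp_finsetSum _ fun l _ => memLp_finsetSum _ fun a _ =>
      memLp_finsetSum _ fun b _ => (gaussBlocks_memLp dout r l a b 3).abs
  have h2 := h.integrable_norm_pow (by norm_num)
  refine h2.congr (Filter.Eventually.of_forall fun R => ?_)
  simp [abs_of_nonneg (absSum_nonneg R)]

lemma frob_le_sum {m n : ℕ} (M : Matrix (Fin m) (Fin n) ℝ) : ‖M‖ ≤ ∑ i, ∑ j, |M i j| := by
  rw [Matrix.frobenius_norm_def, ← Real.sqrt_eq_rpow]
  refine Real.sqrt_le_iff.2 ⟨by positivity, ?_⟩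
  have h1 : ∀ {k : ℕ} (g : Fin k → ℝ), (∀ i, 0 ≤ g i) → ∑ i, g i ^ 2 ≤ (∑ i, g i) ^ 2 :=
    fun g hg => Finset.sum_sq_le_sq_sum_of_nonneg (fun i _ => hg i)
  calc ∑ i, ∑ j, ‖M i j‖ ^ (2 : ℝ) = ∑ i, ∑ j, |M i j| ^ 2 := by simp
    _ ≤ ∑ i, (∑ j, |M i j|) ^ 2 := Finset.sum_le_sum fun i _ => h1 _ fun _ => abs_nonneg _
    _ ≤ _ := h1 _ fun i => by positivity

lemma entry_le_one {m n : ℕ} (A : Matrix (Fin m) (Fin n) ℝ) (hA : Aᵀ * A = 1) (i : Fin m)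
    (j : Fin n) : |A i j| ≤ 1 := by
  have h : ∑ k, A k j ^ 2 = 1 := by
    have := congrFun (congrFun hA j) j
    simpa [Matrix.mul_apply, sq] using this
  have h2 := Finset.single_le_sum (f := fun k => A k j ^ 2) (fun _ _ => sq_nonneg _)
    (Finset.mem_univ i)
  rw [h] at h2
  exact (sq_le_one_iff_abs_le_one _).1 h2

lemma perturb_entry (A : (l : Fin L) → Matrix (Fin (din l)) (Fin (r l)) ℝ)
    (hA : ∀ l, (A l)ᵀ * A l = 1) (R : (l : Fin L) → Fin (dout l) → Fin (r l) → ℝ) (l : Fin L)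
    (i : Fin (dout l)) (j : Fin (din l)) :
    |(Matrix.of (R l) * (A l)ᵀ) i j| ≤ ∑ k, |R l i k| := by
  rw [Matrix.mul_apply]
  refine (Finset.abs_sum_le_sum_abs _ _).trans (Finset.sum_le_sum fun k _ => ?_)
  rw [abs_mul]
  exact mul_le_of_le_one_right (abs_nonneg _) (entry_le_one _ (hA l) _ _)

lemma perturb_norm (A : (l : Fin L) → Matrix (Fin (din l)) (Fin (r l)) ℝ)
    (hA : ∀ l, (A l)ᵀ * A l = 1) (R : (l : Fin L) → Fin (dout l) → Fin (r l) → ℝ) :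
    ‖perturbA A R‖ ≤ (∑ l, (din l : ℝ)) * absSum R := by
  have hS := absSum_nonneg R
  refine (pi_norm_le_iff_of_nonneg (by positivity)).2 fun l => ?_
  refine (frob_le_sum _).trans ?_
  calc ∑ i, ∑ j, |perturbA A R l i j| ≤ ∑ i, ∑ j : Fin (din l), ∑ k, |R l i k| :=
        Finset.sum_le_sum fun i _ => Finset.sum_le_sum fun j _ => perturb_entry A hA R l i j
    _ = (din l : ℝ) * ∑ i, ∑ k, |R l i k| := by simp [Finset.mul_sum]
    _ ≤ _ := by
      refine mul_le_mul ?_ (absSum_block R l) (by positivity) (by positivity)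
      exact Finset.single_le_sum (f := fun l => (din l : ℝ)) (fun _ _ => by positivity)
        (Finset.mem_univ l)

/-- The perturbation as a linear map. -/
def perturbLin (dout : Fin L → ℕ) (A : (l : Fin L) → Matrix (Fin (din l)) (Fin (r l)) ℝ) :
    ((l : Fin L) → Fin (dout l) → Fin (r l) → ℝ) →ₗ[ℝ]
      ((l : Fin L) → Matrix (Fin (dout l)) (Fin (din l)) ℝ) where
  toFun := perturbA A
  map_add' R S := by
    funext l
    exact Matrix.add_mul (Matrix.of (R l)) (Matrix.of (S l)) _
  map_smul' c R := by
    funext l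
    exact Matrix.smul_mul c (Matrix.of (R l)) _

lemma perturb_eBasis (A : (l : Fin L) → Matrix (Fin (din l)) (Fin (r l)) ℝ)
    (l : Fin L) (a : Fin (dout l)) (b : Fin (r l)) :
    perturbA A (eBasis dout r l a b) =
      ∑ j, A l j b • (Pi.single l (Matrix.single a j (1 : ℝ)) :
        (l : Fin L) → Matrix (Fin (dout l)) (Fin (din l)) ℝ) := by
  funext l'
  ext i j
  rw [Finset.sum_apply, Matrix.sum_apply]
  by_cases hl : l' = l
  · subst hl
    simp only [perturbA, eBasis, Matrix.mul_apply, Pi.smul_apply, Pi.single_eq_same,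
      Matrix.smul_apply, Matrix.of_apply, Matrix.transpose_apply, Matrix.single_apply]
    by_cases hi : i = a
    · subst hi
      simp [Pi.single_apply]
    · simp [hi, Ne.symm hi]
  · simp [perturbA, eBasis, Matrix.mul_apply, hl]

lemma taylor_bound {E : Type*} [NormedAddCommGroup E] [NormedSpace ℝ E] (f : E → ℝ)
    (hf : Differentiable ℝ f) (K : ℝ) (hK : 0 ≤ K)
    (hL : ∀ W W', ‖fderiv ℝ f W - fderiv ℝ f W'‖ ≤ K * ‖W - W'‖) (W h : E) :
    |f (W + h) - f W - fderiv ℝ f W h| ≤ K * ‖h‖ ^ 2 := by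
  have := Convex.norm_image_sub_le_of_norm_fderiv_le' (𝕜 := ℝ) (f := f) (φ := fderiv ℝ f W)
    (C := K * ‖h‖) (s := Metric.closedBall W ‖h‖) (x := W) (y := W + h)
    (fun x _ => hf x) (fun x hx => (hL x W).trans (by
      gcongr
      simpa [dist_eq_norm] using hx)) (convex_closedBall _ _) (by simp) (by simp)
  simpa [sq, mul_assoc] using this

/-- if the row space of the true layer gradient lies in `span(A_ℓ)`
(i.e., `∇_{W_ℓ} f(W)·A_ℓA_ℓᵀ = ∇_{W_ℓ} f(W)`), then the expected AGZO two-point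
estimator is within `c_ℓ·Lip·μ` of the true layer gradient in Frobenius norm, with
`c_ℓ > 0` depending only on the dimensions.  Hence AGZO is asymptotically unbiased
as `μ → 0`. -/
theorem agzo_asymptotically_unbiased
    (L : ℕ) (hL : 0 < L) (dout din r : Fin L → ℕ)
    (hdout : ∀ ℓ, 0 < dout ℓ) (hdin : ∀ ℓ, 0 < din ℓ) (hr : ∀ ℓ, 0 < r ℓ)
    (ℓ : Fin L) :
    ∃ c : ℝ, 0 < c ∧
      ∀ (A : (ℓ' : Fin L) → Matrix (Fin (din ℓ')) (Fin (r ℓ')) ℝ),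
        (∀ ℓ', (A ℓ')ᵀ * A ℓ' = 1) →
      ∀ (Lip : ℝ), 0 ≤ Lip →
      ∀ (f : ((ℓ' : Fin L) → Matrix (Fin (dout ℓ')) (Fin (din ℓ')) ℝ) → ℝ),
        Differentiable ℝ f →
        (∀ W W', ‖fderiv ℝ f W - fderiv ℝ f W'‖ ≤ Lip * ‖W - W'‖) →
      ∀ (μ : ℝ), 0 < μ →
      ∀ (W : (ℓ' : Fin L) → Matrix (Fin (dout ℓ')) (Fin (din ℓ')) ℝ),
        gradBlock f W ℓ * (A ℓ * (A ℓ)ᵀ) = gradBlock f W ℓ →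
        ‖matExp (gaussBlocks dout r)
            (fun R => ((f (W + μ • perturbA A R) - f W) / μ) •
              (Matrix.of (R ℓ) * (A ℓ)ᵀ))
          - gradBlock f W ℓ‖ ≤ c * Lip * μ := by
  set S3 : ℝ := ∫ R, (absSum R) ^ 3 ∂(gaussBlocks dout r) with hS3
  have hS3n : 0 ≤ S3 := integral_nonneg fun R => pow_nonneg (absSum_nonneg R) 3
  set C : ℝ := ∑ l, (din l : ℝ) with hC
  have hCn : 0 ≤ C := by positivity
  refine ⟨(dout ℓ : ℝ) * ((din ℓ : ℝ) * (C ^ 2 * S3)) + 1, by positivity, ?_⟩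
  intro A hA Lip hLip f hf hfL μ hμ W hG
  have key : ∀ i j, |(matExp (gaussBlocks dout r)
            (fun R => ((f (W + μ • perturbA A R) - f W) / μ) •
              (Matrix.of (R ℓ) * (A ℓ)ᵀ)) - gradBlock f W ℓ) i j| ≤ Lip * μ * (C ^ 2 * S3) := by
    intro i j
    set D : ((ℓ' : Fin L) → Matrix (Fin (dout ℓ')) (Fin (din ℓ')) ℝ) →L[ℝ] ℝ := fderiv ℝ f W
      with hD
    set φ : ((l : Fin L) → Fin (dout l) → Fin (r l) → ℝ) →ₗ[ℝ] ℝ :=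
      D.toLinearMap ∘ₗ perturbLin dout A with hφ
    have hφa : ∀ R, φ R = D (perturbA A R) := fun R => rfl
    have hcont : Continuous (perturbA (dout := dout) A) :=
      (perturbLin dout A).continuous_of_finiteDimensional
    -- the linear part
    have hlin_eq : ∀ R : (l : Fin L) → Fin (dout l) → Fin (r l) → ℝ,
        φ R * (Matrix.of (R ℓ) * (A ℓ)ᵀ) i j = ∑ k, A ℓ j k * (φ R * R ℓ i k) := by
      intro R
      rw [Matrix.mul_apply, Finset.mul_sum]
      refine Finset.sum_congr rfl fun k _ => ?_
      simp only [Matrix.of_apply, Matrix.transpose_apply]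
      ring
    have hlin_int : Integrable (fun R => φ R * (Matrix.of (R ℓ) * (A ℓ)ᵀ) i j)
        (gaussBlocks dout r) := by
      simp only [hlin_eq]
      exact integrable_finsetSum _ fun k _ => (cov_linear_integrable φ ℓ i k).const_mul _
    have hlin : ∫ R, φ R * (Matrix.of (R ℓ) * (A ℓ)ᵀ) i j ∂(gaussBlocks dout r)
        = gradBlock f W ℓ i j := by
      simp only [hlin_eq]
      rw [integral_finsetSum _ fun k _ => (cov_linear_integrable φ ℓ i k).const_mul _]
      simp only [integral_const_mul, cov_linear]
      conv_rhs => rw [← hG, ← Matrix.mul_assoc, Matrix.mul_apply]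
      refine Finset.sum_congr rfl fun k _ => ?_
      rw [hφa, perturb_eBasis, map_sum, Matrix.mul_apply, Matrix.transpose_apply, mul_comm]
      congr 1
      refine Finset.sum_congr rfl fun j' _ => ?_
      rw [map_smul, smul_eq_mul, mul_comm]
      rfl
    -- the remainder
    set g : ((l : Fin L) → Fin (dout l) → Fin (r l) → ℝ) → ℝ := fun R =>
      ((f (W + μ • perturbA A R) - f W) / μ) * (Matrix.of (R ℓ) * (A ℓ)ᵀ) i j with hg
    have hgc : Continuous g := by
      have h1 : Continuous fun R => f (W + μ • perturbA (dout := dout) A R) :=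
        hf.continuous.comp (continuous_const.add (hcont.const_smul μ))
      have h2 : Continuous fun R : (l : Fin L) → Fin (dout l) → Fin (r l) → ℝ =>
          (Matrix.of (R ℓ) * (A ℓ)ᵀ) i j := by
        simp only [Matrix.mul_apply, Matrix.of_apply]
        fun_prop
      exact ((h1.sub continuous_const).div_const μ).mul h2
    have hb : ∀ R, ‖g R - φ R * (Matrix.of (R ℓ) * (A ℓ)ᵀ) i j‖
        ≤ Lip * μ * (C ^ 2 * absSum R ^ 3) := by
      intro R
      have hS := absSum_nonneg R
      have ht := taylor_bound f hf Lip hLip hfL W (μ • perturbA A R)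
      rw [map_smul, smul_eq_mul, norm_smul, Real.norm_of_nonneg hμ.le] at ht
      have hn := perturb_norm A hA R
      have he := (perturb_entry A hA R ℓ i j).trans (absSum_row R ℓ i)
      have h1 : g R - φ R * (Matrix.of (R ℓ) * (A ℓ)ᵀ) i j =
          (f (W + μ • perturbA A R) - f W - μ * D (perturbA A R)) / μ *
            (Matrix.of (R ℓ) * (A ℓ)ᵀ) i j := by
        simp only [hg, hφa]
        field_simp
      rw [h1, Real.norm_eq_abs, abs_mul, abs_div, abs_of_pos hμ]
      calc _ ≤ (Lip * (μ * (C * absSum R)) ^ 2) / μ * absSum R := by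
            refine mul_le_mul ?_ he (abs_nonneg _) (by positivity)
            refine div_le_div_of_nonneg_right (ht.trans ?_) hμ.le
            gcongr
        _ = _ := by field_simp
    have hbi : Integrable (fun R => Lip * μ * (C ^ 2 * absSum R ^ 3)) (gaussBlocks dout r) :=
      ((absSum_integrable dout r).const_mul _).const_mul _
    have hri : Integrable (fun R => g R - φ R * (Matrix.of (R ℓ) * (A ℓ)ᵀ) i j)
        (gaussBlocks dout r) :=
      hbi.mono' (hgc.aestronglyMeasurable.sub hlin_int.aestronglyMeasurable)
        (Filter.Eventually.of_forall hb)
    have hgi : Integrable g (gaussBlocks dout r) := by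
      refine (hri.add hlin_int).congr (Filter.Eventually.of_forall fun R => ?_)
      simp
    have hfin : (matExp (gaussBlocks dout r)
            (fun R => ((f (W + μ • perturbA A R) - f W) / μ) •
              (Matrix.of (R ℓ) * (A ℓ)ᵀ)) - gradBlock f W ℓ) i j =
        ∫ R, (g R - φ R * (Matrix.of (R ℓ) * (A ℓ)ᵀ) i j) ∂(gaussBlocks dout r) := by
      rw [integral_sub hgi hlin_int, hlin]
      rfl
    rw [hfin, ← Real.norm_eq_abs]
    refine (norm_integral_le_of_norm_le hbi (Filter.Eventually.of_forall hb)).trans ?_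
    rw [integral_const_mul, integral_const_mul]
  refine (frob_le_sum _).trans ?_
  calc _ ≤ ∑ i : Fin (dout ℓ), ∑ j : Fin (din ℓ), Lip * μ * (C ^ 2 * S3) :=
        Finset.sum_le_sum fun i _ => Finset.sum_le_sum fun j _ => key i j
    _ = (dout ℓ : ℝ) * ((din ℓ : ℝ) * (C ^ 2 * S3)) * Lip * μ := by
        simp only [Finset.sum_const, Finset.card_univ, Fintype.card_fin, nsmul_eq_mul]; ring
    _ ≤ _ := by
        have : 0 ≤ Lip * μ := by positivity
        nlinarith

end
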